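/- For every real w with 0 < w ≤ w*, the SOR value-iteration operator T_w is a max-norm contraction with factor (w·α + 1 − w): for all U, V : S → ℝ, ‖T_w U − T_w V‖ ≤ (w·α + 1 − w)·‖U − V‖. -/

import Mathlib

open Finset

/-- Maximum of a real-valued function over a nonempty finite type. -/
noncomputable def fmax {A : Type*} [Fintype A] [Nonempty A] (f : A → ℝ) : ℝ :=
  Finset.univ.sup' Finset.univ_nonempty f

/-- Sup (maximum-absolute-value) norm of a real-valued function on a nonempty finite type. -/
noncomputable def supNorm {I : Type*} [Fintype I] [Nonempty I] (f : I → ℝ) : ℝ :=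
  fmax (fun i => |f i|)

/-- The over-relaxation bound `w* = min_{(i,a)} 1/(1 - α p(i|i,a))`. -/
noncomputable def wstar {S A : Type*} [Fintype S] [Fintype A] [Nonempty S] [Nonempty A]
    (p : S → A → S → ℝ) (α : ℝ) : ℝ :=
  Finset.univ.inf' Finset.univ_nonempty (fun ia : S × A => 1 / (1 - α * p ia.1 ia.2 ia.1))

/-- The SOR Q-Bellman operator `H_w`. -/
noncomputable def Hw {S A : Type*} [Fintype S] [Fintype A] [Nonempty S] [Nonempty A]
    (p : S → A → S → ℝ) (r : S → A → ℝ) (α w : ℝ) (Q : S → A → ℝ) : S → A → ℝ :=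
  fun i a => w * (r i a + α * ∑ j, p i a j * fmax (Q j)) + (1 - w) * fmax (Q i)

/-- The SOR value-iteration operator `T_w`. -/
noncomputable def Tw {S A : Type*} [Fintype S] [Fintype A] [Nonempty S] [Nonempty A]
    (p : S → A → S → ℝ) (r : S → A → ℝ) (α w : ℝ) (V : S → ℝ) : S → ℝ :=
  fun i => w * fmax (fun a => r i a + α * ∑ j, p i a j * V j) + (1 - w) * V i

/-!
For each action, the map `V ↦ w (r(i,a) + α ∑ⱼ p(j|i,a) V(j)) + (1 - w) V(i)` is affine with
weights `w α p(j|i,a) + (1 - w) δᵢⱼ`. Off the diagonal these are clearly nonnegative; on the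
diagonal nonnegativity reads `w (1 - α p(i|i,a)) ≤ 1`, which is what `w ≤ w*` provides. The weights
therefore have `ℓ¹`-norm at most `w α + 1 - w`, and taking the maximum over the actions is
nonexpansive.
-/

section Maximum

variable {ι : Type*} [Fintype ι] [Nonempty ι]

theorem le_fmax (f : ι → ℝ) (i : ι) : f i ≤ fmax f :=
  le_sup' f (mem_univ i)

theorem fmax_le {f : ι → ℝ} {c : ℝ} (h : ∀ i, f i ≤ c) : fmax f ≤ c :=
  sup'_le _ _ fun i _ => h i

theorem abs_le_supNorm (f : ι → ℝ) (i : ι) : |f i| ≤ supNorm f :=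
  le_fmax (fun i => |f i|) i

theorem supNorm_le {f : ι → ℝ} {c : ℝ} (h : ∀ i, |f i| ≤ c) : supNorm f ≤ c :=
  fmax_le h

theorem supNorm_nonneg (f : ι → ℝ) : 0 ≤ supNorm f :=
  (abs_nonneg _).trans (abs_le_supNorm f (Classical.arbitrary ι))

theorem mul_fmax_add {w : ℝ} (hw : 0 ≤ w) (f : ι → ℝ) (c : ℝ) :
    w * fmax f + c = fmax fun i => w * f i + c := by
  have hmono : Monotone fun x : ℝ => w * x + c := fun x y hxy => by dsimp only; gcongr
  exact apply_sup'_eq_sup'_comp _ (fun x : ℝ => w * x + c) hmono.map_sup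

theorem abs_fmax_sub_fmax_le {f g : ι → ℝ} {c : ℝ} (h : ∀ i, |f i - g i| ≤ c) :
    |fmax f - fmax g| ≤ c := by
  rw [abs_sub_le_iff, sub_le_iff_le_add, sub_le_iff_le_add]
  constructor <;> refine fmax_le fun i => ?_
  · linarith [(abs_sub_le_iff.1 (h i)).1, le_fmax g i]
  · linarith [(abs_sub_le_iff.1 (h i)).2, le_fmax f i]

theorem abs_sum_mul_le_sum_mul_supNorm {q : ι → ℝ} (hq : ∀ j, 0 ≤ q j) (f : ι → ℝ) :
    |∑ j, q j * f j| ≤ (∑ j, q j) * supNorm f :=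
  calc |∑ j, q j * f j|
      ≤ ∑ j, |q j * f j| := abs_sum_le_sum_abs _ _
    _ = ∑ j, q j * |f j| := by simp only [abs_mul, abs_of_nonneg (hq _)]
    _ ≤ ∑ j, q j * supNorm f :=
      sum_le_sum fun j _ => mul_le_mul_of_nonneg_left (abs_le_supNorm f j) (hq j)
    _ = (∑ j, q j) * supNorm f := (sum_mul _ _ _).symm

end Maximum

section RelaxedWeight

variable {S : Type*} [DecidableEq S]

/-- The weights `w α q(j) + (1 - w) δᵢⱼ` with which a relaxed backup at state `i` averages the
values of the successor states `j`, where `q` is the transition law out of `i`. -/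
def relaxedWeight (q : S → ℝ) (α w : ℝ) (i j : S) : ℝ :=
  w * α * q j + if j = i then 1 - w else 0

theorem relaxedWeight_nonneg {q : S → ℝ} {α w : ℝ} {i : S} (hq : ∀ j, 0 ≤ q j) (hα : 0 ≤ α)
    (hw : 0 ≤ w) (hdiag : w * (1 - α * q i) ≤ 1) (j : S) : 0 ≤ relaxedWeight q α w i j := by
  unfold relaxedWeight
  split_ifs with hji
  · subst hji
    linarith
  · rw [add_zero]
    exact mul_nonneg (mul_nonneg hw hα) (hq j)

theorem sum_relaxedWeight_mul [Fintype S] (q : S → ℝ) (α w : ℝ) (i : S) (V : S → ℝ) :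
    ∑ j, relaxedWeight q α w i j * V j = w * α * ∑ j, q j * V j + (1 - w) * V i := by
  simp [relaxedWeight, add_mul, sum_add_distrib, mul_sum, mul_assoc]

theorem sum_relaxedWeight [Fintype S] (q : S → ℝ) (α w : ℝ) (i : S) :
    ∑ j, relaxedWeight q α w i j = w * α * ∑ j, q j + (1 - w) := by
  simpa using sum_relaxedWeight_mul q α w i 1

theorem sum_relaxedWeight_le [Fintype S] {q : S → ℝ} {α w : ℝ} (hq : ∑ j, q j ≤ 1)
    (hα : 0 ≤ α) (hw : 0 ≤ w) (i : S) : ∑ j, relaxedWeight q α w i j ≤ w * α + 1 - w := by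
  rw [sum_relaxedWeight]
  linarith [mul_le_of_le_one_right (mul_nonneg hw hα) hq]

end RelaxedWeight

section Relaxation

variable {S A : Type*} [Fintype S] [Fintype A] [Nonempty S] [Nonempty A]

theorem mul_one_sub_le_one_of_le_wstar {p : S → A → S → ℝ} {α w : ℝ} (hw0 : 0 < w)
    (hw : w ≤ wstar p α) (i : S) (a : A) : w * (1 - α * p i a i) ≤ 1 := by
  have hle : w ≤ 1 / (1 - α * p i a i) :=
    hw.trans (inf'_le (fun ia : S × A => 1 / (1 - α * p ia.1 ia.2 ia.1)) (mem_univ (i, a)))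
  have hpos : 0 < 1 - α * p i a i := one_div_pos.1 (hw0.trans_le hle)
  exact (le_div_iff₀ hpos).1 hle

theorem Tw_eq_fmax_relaxedWeight [DecidableEq S] (p : S → A → S → ℝ) (r : S → A → ℝ) (α : ℝ)
    {w : ℝ} (hw : 0 ≤ w) (V : S → ℝ) (i : S) :
    Tw p r α w V i = fmax fun a => w * r i a + ∑ j, relaxedWeight (p i a) α w i j * V j := by
  simp only [Tw, mul_fmax_add hw, sum_relaxedWeight_mul, mul_add, mul_assoc, add_assoc]

end Relaxation

theorem Tw_contraction_general {S A : Type*} [Fintype S] [Fintype A] [Nonempty S] [Nonempty A]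
    (p : S → A → S → ℝ) (r : S → A → ℝ) (α : ℝ)
    (hp : ∀ i a j, 0 ≤ p i a j) (hsum : ∀ i a, ∑ j, p i a j ≤ 1) (hα : 0 ≤ α)
    (w : ℝ) (hw0 : 0 < w) (hw : w ≤ wstar p α) (U V : S → ℝ) :
    supNorm (fun i => Tw p r α w U i - Tw p r α w V i) ≤
      (w * α + 1 - w) * supNorm (fun i => U i - V i) := by
  classical
  refine supNorm_le fun i => ?_
  simp only [Tw_eq_fmax_relaxedWeight p r α hw0.le]
  refine abs_fmax_sub_fmax_le fun a => ?_
  have hnonneg : ∀ j, 0 ≤ relaxedWeight (p i a) α w i j :=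
    relaxedWeight_nonneg (hp i a) hα hw0.le (mul_one_sub_le_one_of_le_wstar hw0 hw i a)
  rw [add_sub_add_left_eq_sub, ← sum_sub_distrib]
  simp only [← mul_sub]
  calc |∑ j, relaxedWeight (p i a) α w i j * (U j - V j)|
      ≤ (∑ j, relaxedWeight (p i a) α w i j) * supNorm (fun j => U j - V j) :=
        abs_sum_mul_le_sum_mul_supNorm hnonneg _
    _ ≤ (w * α + 1 - w) * supNorm (fun j => U j - V j) :=
        mul_le_mul_of_nonneg_right (sum_relaxedWeight_le (hsum i a) hα hw0.le i)
          (supNorm_nonneg _)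

/-- For `0 < w ≤ w*`, the SOR value-iteration operator `T_w` is a max-norm contraction with
factor `w·α + 1 - w`. -/
theorem Tw_contraction {S A : Type*} [Fintype S] [Fintype A] [Nonempty S] [Nonempty A]
    (p : S → A → S → ℝ) (r : S → A → ℝ) (α : ℝ)
    (hp : ∀ i a j, 0 ≤ p i a j) (hsum : ∀ i a, ∑ j, p i a j = 1)
    (hα0 : 0 ≤ α) (hα1 : α < 1)
    (w : ℝ) (hw0 : 0 < w) (hw : w ≤ wstar p α) :
    ∀ U V : S → ℝ,
      supNorm (fun i => Tw p r α w U i - Tw p r α w V i) ≤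
        (w * α + 1 - w) * supNorm (fun i => U i - V i) := by
  exact Tw_contraction_general p r α hp (fun i a => (hsum i a).le) hα0 w hw0 hw
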